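/- Return equivalence of the Diaster proxy reward: Assume ρ_i^π(s) > 0 for every state s ∈ S and every 0 ≤ i ≤ T, and suppose r : S × A → ℝ satisfies R_sub(τ_{0:T}) = Σ_{t=0}^{T−1} r(s_t,a_t) for every full trajectory τ_{0:T} (exact episodic return decomposition). Then Σ_{i=0}^{T−1} Σ_{s∈S} Σ_{a∈A} ρ_i^π(s) π(a|s) r̂_i^π(s,a) = Σ_{τ_{0:T}} 𝒯_T^π(τ_{0:T}) · Σ_{t=0}^{T−1} r(s_t,a_t); i.e., the expected total proxy reward along an episode equals the expected episodic return of the original reward r under the policy π. -/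

import Mathlib

open Finset

/-- Trajectory distribution 𝒯_t^π. -/
noncomputable def Ttraj {S A : Type*} (ρ0 : S → ℝ) (P : S → A → S → ℝ)
    (pol : S → A → ℝ) : (t : ℕ) → (Fin t → S × A) → ℝ
  | 0, _ => 1
  | t + 1, τ =>
      ρ0 (τ 0).1 * pol (τ 0).1 (τ 0).2 *
        ∏ i : Fin t,
          (P (τ i.castSucc).1 (τ i.castSucc).2 (τ i.succ).1 *
            pol (τ i.succ).1 (τ i.succ).2)

/-- On-policy state distribution ρ_t^π. -/
noncomputable def rhoPi {S A : Type*} [Fintype S] [Fintype A] (ρ0 : S → ℝ)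
    (P : S → A → S → ℝ) (pol : S → A → ℝ) : ℕ → S → ℝ
  | 0 => ρ0
  | t + 1 => fun s =>
      ∑ τ : Fin (t + 1) → S × A,
        Ttraj ρ0 P pol (t + 1) τ * P (τ (Fin.last t)).1 (τ (Fin.last t)).2 s

/-- Conditioned sub-trajectory distribution Γ_t^π(τ|s). -/
noncomputable def GammaPi {S A : Type*} [Fintype S] [Fintype A] (ρ0 : S → ℝ)
    (P : S → A → S → ℝ) (pol : S → A → ℝ) :
    (t : ℕ) → (Fin t → S × A) → S → ℝ
  | 0, _, _ => 1
  | t + 1, τ, s =>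
      Ttraj ρ0 P pol (t + 1) τ * P (τ (Fin.last t)).1 (τ (Fin.last t)).2 s /
        rhoPi ρ0 P pol (t + 1) s

/-- Step-wise proxy reward r̂_t^π(s,a). -/
noncomputable def rhat {S A : Type*} [Fintype S] [Fintype A] (ρ0 : S → ℝ)
    (P : S → A → S → ℝ) (pol : S → A → ℝ)
    (Rsub : (t : ℕ) → (Fin t → S × A) → ℝ) (t : ℕ) (s : S) (a : A) : ℝ :=
  ∑ τ : Fin t → S × A,
    GammaPi ρ0 P pol t τ s * (Rsub (t + 1) (Fin.snoc τ (s, a)) - Rsub t τ)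

/-- h-step transition kernel μ_h^π (junk value 0 at h = 0). -/
noncomputable def muStep {S A : Type*} [Fintype S] [Fintype A]
    (P : S → A → S → ℝ) (pol : S → A → ℝ) : ℕ → S → A → S → ℝ
  | 0, _, _, _ => 0
  | 1, s, a, s' => P s a s'
  | h + 2, s, a, s'' =>
      ∑ s', ∑ a', muStep P pol (h + 1) s a s' * pol s' a' * P s' a' s''

/-!
Weighting `r̂_t(s, a)` by the joint law `ρ_t(s) π(a|s)` undoes the conditioning in `Γ_t`, so the
expected proxy reward at time `t` is the expectation of `R_sub(τ_{0:t+1}) - R_sub(τ_{0:t})` under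
`𝒯_{t+1}`. The law of the first `t` steps under `𝒯_{t+1}` is `𝒯_t`, hence this is
`𝔼 R_sub(τ_{0:t+1}) - 𝔼 R_sub(τ_{0:t})`, and the sum over `t` telescopes.
-/

theorem sum_piFin_succ_eq_sum_snoc {n : ℕ} {X : Fin (n + 1) → Type*} [∀ i, Fintype (X i)]
    {M : Type*} [AddCommMonoid M] (f : (∀ i, X i) → M) :
    ∑ x, f x = ∑ y : X (Fin.last n), ∑ x : ∀ i : Fin n, X i.castSucc, f (Fin.snoc x y) := by
  rw [← Fintype.sum_prod_type', ← (Fin.snocEquiv X).sum_comp]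
  rfl

section

variable {S A : Type*} (ρ0 : S → ℝ) (P : S → A → S → ℝ) (pol : S → A → ℝ)

/-- The joint law of the sub-trajectory `τ_{0:t}` and the next state `s_t`; for `t ≥ 1` it is the
numerator of `Γ_t^π(τ_{0:t}|s_t)`. -/
noncomputable def trajStateWeight : (t : ℕ) → (Fin t → S × A) → S → ℝ
  | 0, _, s => ρ0 s
  | t + 1, τ, s =>
      Ttraj ρ0 P pol (t + 1) τ * P (τ (Fin.last t)).1 (τ (Fin.last t)).2 s

theorem Ttraj_snoc (t : ℕ) (τ : Fin t → S × A) (s : S) (a : A) :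
    Ttraj ρ0 P pol (t + 1) (Fin.snoc τ (s, a)) =
      trajStateWeight ρ0 P pol t τ s * pol s a := by
  cases t with
  | zero => simp [Ttraj, trajStateWeight, Fin.snoc]
  | succ t =>
    have snoc_zero : (Fin.snoc τ (s, a) : Fin (t + 2) → S × A) 0 = τ 0 :=
      Fin.snoc_castSucc (α := fun _ => S × A) (s, a) τ 0
    simp only [Ttraj, trajStateWeight, Fin.prod_univ_castSucc (n := t), snoc_zero,
      Fin.succ_last, Fin.snoc_last, Fin.snoc_castSucc, Fin.succ_castSucc]
    ring

variable {ρ0 P pol}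

theorem Ttraj_nonneg (hρ0 : ∀ s, 0 ≤ ρ0 s) (hP : ∀ s a s', 0 ≤ P s a s')
    (hpol : ∀ s a, 0 ≤ pol s a) (t : ℕ) (τ : Fin t → S × A) :
    0 ≤ Ttraj ρ0 P pol t τ := by
  cases t with
  | zero => exact zero_le_one
  | succ t =>
    exact mul_nonneg (mul_nonneg (hρ0 _) (hpol _ _))
      (prod_nonneg fun _ _ => mul_nonneg (hP _ _ _) (hpol _ _))

theorem trajStateWeight_nonneg (hρ0 : ∀ s, 0 ≤ ρ0 s) (hP : ∀ s a s', 0 ≤ P s a s')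
    (hpol : ∀ s a, 0 ≤ pol s a) (t : ℕ) (τ : Fin t → S × A) (s : S) :
    0 ≤ trajStateWeight ρ0 P pol t τ s := by
  cases t with
  | zero => exact hρ0 s
  | succ t => exact mul_nonneg (Ttraj_nonneg hρ0 hP hpol _ _) (hP _ _ _)

theorem sum_trajStateWeight_state [Fintype S] (hρ0 : ∑ s, ρ0 s = 1)
    (hP : ∀ s a, ∑ s', P s a s' = 1) (t : ℕ) (τ : Fin t → S × A) :
    ∑ s, trajStateWeight ρ0 P pol t τ s = Ttraj ρ0 P pol t τ := by
  cases t with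
  | zero => exact hρ0
  | succ t => simp only [trajStateWeight, ← mul_sum, hP, mul_one]

end

section

variable {S A : Type*} [Fintype S] [Fintype A] {ρ0 : S → ℝ} {P : S → A → S → ℝ}
  {pol : S → A → ℝ}

theorem sum_Ttraj_snoc (hρ0 : ∑ s, ρ0 s = 1) (hP : ∀ s a, ∑ s', P s a s' = 1)
    (hpol : ∀ s, ∑ a, pol s a = 1) (t : ℕ) (τ : Fin t → S × A) :
    ∑ x : S × A, Ttraj ρ0 P pol (t + 1) (Fin.snoc τ x) = Ttraj ρ0 P pol t τ := by
  simp only [Fintype.sum_prod_type, Ttraj_snoc, ← mul_sum, hpol, mul_one,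
    sum_trajStateWeight_state hρ0 hP]

theorem sum_trajStateWeight_traj (ρ0 : S → ℝ) (P : S → A → S → ℝ) (pol : S → A → ℝ) (t : ℕ)
    (s : S) : ∑ τ, trajStateWeight ρ0 P pol t τ s = rhoPi ρ0 P pol t s := by
  cases t with
  | zero => simp [trajStateWeight, rhoPi]
  | succ t => rfl

/-- The expectation of a function of the `t`-step sub-trajectory under `𝒯_t^π`. -/
noncomputable def trajExpect (ρ0 : S → ℝ) (P : S → A → S → ℝ) (pol : S → A → ℝ) (t : ℕ)
    (f : (Fin t → S × A) → ℝ) : ℝ :=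
  ∑ τ, Ttraj ρ0 P pol t τ * f τ

theorem trajExpect_sub (t : ℕ) (f g : (Fin t → S × A) → ℝ) :
    trajExpect ρ0 P pol t (fun τ => f τ - g τ) =
      trajExpect ρ0 P pol t f - trajExpect ρ0 P pol t g := by
  simp only [trajExpect, mul_sub, sum_sub_distrib]

theorem trajExpect_comp_init (hρ0 : ∑ s, ρ0 s = 1) (hP : ∀ s a, ∑ s', P s a s' = 1)
    (hpol : ∀ s, ∑ a, pol s a = 1) (t : ℕ) (f : (Fin t → S × A) → ℝ) :
    trajExpect ρ0 P pol (t + 1) (fun τ => f (Fin.init τ)) = trajExpect ρ0 P pol t f := by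
  simp only [trajExpect, sum_piFin_succ_eq_sum_snoc, Fin.init_snoc]
  rw [sum_comm]
  simp only [← sum_mul, sum_Ttraj_snoc hρ0 hP hpol]

-- If `ρ_t(s) = 0`, then `Γ_t(·|s)` is a junk value, but each weight is a nonnegative summand of
-- `ρ_t(s)`, so both sides vanish.
theorem rhoPi_mul_GammaPi (hρ0 : ∀ s, 0 ≤ ρ0 s) (hP : ∀ s a s', 0 ≤ P s a s')
    (hpol : ∀ s a, 0 ≤ pol s a) (t : ℕ) (τ : Fin t → S × A) (s : S) :
    rhoPi ρ0 P pol t s * GammaPi ρ0 P pol t τ s = trajStateWeight ρ0 P pol t τ s := by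
  cases t with
  | zero => exact mul_one _
  | succ t =>
    refine mul_div_cancel_of_imp' fun rho_eq_zero => ?_
    rw [← sum_trajStateWeight_traj, sum_eq_zero_iff_of_nonneg fun τ _ =>
      trajStateWeight_nonneg hρ0 hP hpol _ τ s] at rho_eq_zero
    exact rho_eq_zero τ (mem_univ τ)

theorem sum_rhoPi_mul_pol_mul_rhat (hρ0 : ∀ s, 0 ≤ ρ0 s) (hP : ∀ s a s', 0 ≤ P s a s')
    (hpol : ∀ s a, 0 ≤ pol s a) (Rsub : (t : ℕ) → (Fin t → S × A) → ℝ) (t : ℕ) :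
    ∑ s, ∑ a, rhoPi ρ0 P pol t s * pol s a * rhat ρ0 P pol Rsub t s a =
      trajExpect ρ0 P pol (t + 1) (fun τ => Rsub (t + 1) τ - Rsub t (Fin.init τ)) := by
  simp only [trajExpect, sum_piFin_succ_eq_sum_snoc, Fin.init_snoc, Fintype.sum_prod_type, rhat,
    mul_sum, Ttraj_snoc, ← rhoPi_mul_GammaPi hρ0 hP hpol]
  refine sum_congr rfl fun s _ => sum_congr rfl fun a _ => sum_congr rfl fun τ _ => ?_
  ring

end

theorem diaster_return_equivalence_general {S A : Type*} [Fintype S] [Fintype A] (T : ℕ)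
    (ρ0 : S → ℝ) (hρ0nn : ∀ s, 0 ≤ ρ0 s) (hρ0sum : ∑ s, ρ0 s = 1)
    (P : S → A → S → ℝ) (hPnn : ∀ s a s', 0 ≤ P s a s')
    (hPsum : ∀ s a, ∑ s', P s a s' = 1)
    (pol : S → A → ℝ) (hpolnn : ∀ s a, 0 ≤ pol s a)
    (hpolsum : ∀ s, ∑ a, pol s a = 1)
    (Rsub : (t : ℕ) → (Fin t → S × A) → ℝ)
    (hRsub0 : ∀ τ : Fin 0 → S × A, Rsub 0 τ = 0) :
    ∑ i ∈ range T, ∑ s, ∑ a,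
        rhoPi ρ0 P pol i s * pol s a * rhat ρ0 P pol Rsub i s a
      = ∑ τ : Fin T → S × A, Ttraj ρ0 P pol T τ * Rsub T τ := by
  have expect_zero : trajExpect ρ0 P pol 0 (Rsub 0) = 0 := by simp [trajExpect, hRsub0]
  calc ∑ i ∈ range T, ∑ s, ∑ a,
        rhoPi ρ0 P pol i s * pol s a * rhat ρ0 P pol Rsub i s a
    _ = ∑ i ∈ range T,
        (trajExpect ρ0 P pol (i + 1) (Rsub (i + 1)) - trajExpect ρ0 P pol i (Rsub i)) := by
      simp only [sum_rhoPi_mul_pol_mul_rhat hρ0nn hPnn hpolnn, trajExpect_sub,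
        trajExpect_comp_init hρ0sum hPsum hpolsum]
    _ = trajExpect ρ0 P pol T (Rsub T) - trajExpect ρ0 P pol 0 (Rsub 0) :=
      sum_range_sub (fun i => trajExpect ρ0 P pol i (Rsub i)) T
    _ = ∑ τ : Fin T → S × A, Ttraj ρ0 P pol T τ * Rsub T τ := by
      rw [expect_zero, sub_zero, trajExpect]

/-- Return equivalence of the Diaster proxy reward. -/
theorem diaster_return_equivalence {S A : Type*} [Fintype S] [Fintype A]
    [Nonempty S] [Nonempty A]
    (T : ℕ) (hT : 1 ≤ T)
    (ρ0 : S → ℝ) (hρ0nn : ∀ s, 0 ≤ ρ0 s) (hρ0sum : ∑ s, ρ0 s = 1)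
    (P : S → A → S → ℝ) (hPnn : ∀ s a s', 0 ≤ P s a s')
    (hPsum : ∀ s a, ∑ s', P s a s' = 1)
    (pol : S → A → ℝ) (hpolnn : ∀ s a, 0 ≤ pol s a)
    (hpolsum : ∀ s, ∑ a, pol s a = 1)
    (Rsub : (t : ℕ) → (Fin t → S × A) → ℝ)
    (hRsub0 : ∀ τ : Fin 0 → S × A, Rsub 0 τ = 0)
    (hρpos : ∀ i ≤ T, ∀ s, 0 < rhoPi ρ0 P pol i s)
    (r : S → A → ℝ)
    (hdecomp : ∀ τ : Fin T → S × A, Rsub T τ = ∑ i : Fin T, r (τ i).1 (τ i).2) :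
    ∑ i ∈ Finset.range T, ∑ s, ∑ a,
        rhoPi ρ0 P pol i s * pol s a * rhat ρ0 P pol Rsub i s a
      = ∑ τ : Fin T → S × A,
          Ttraj ρ0 P pol T τ * ∑ i : Fin T, r (τ i).1 (τ i).2 := by
  simp only [diaster_return_equivalence_general T ρ0 hρ0nn hρ0sum P hPnn hPsum pol hpolnn hpolsum
    Rsub hRsub0, hdecomp]
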